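/- arXiv:2504.16299 — 4 statements merged into one kernel-verified Lean document; each statement's English description precedes it below -/
import Mathlib

section
/- (Generic one-sample test, type II error.) Let E be a normed additive commutative group, let ρ, σ ∈ E, let m ≥ 1, and let σ̂_m be a random element of E defined on a probability space (Ω, ℙ). Suppose there are constants C > 0 and g(m) > 0 such that ℙ(‖σ̂_m − σ‖ ≥ t) ≤ g(m)·exp(−m·C·t²) for all t > 0. Let c_m > 0 satisfy c_m < ‖ρ − σ‖. Then ℙ(‖σ̂_m − ρ‖ ≤ c_m) ≤ g(m)·exp(−C·m·(‖ρ − σ‖ − c_m)²). -/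
open MeasureTheory ProbabilityTheory

/-- Generic one-sample test, type II error: under a sub-Gaussian concentration bound for the
estimator `σ̂` around the true state `σ`, the probability of accepting `H₀` (i.e. that `σ̂` lies
within `c` of the nominal `ρ`) is at most `g·exp(−C·m·(‖ρ−σ‖−c)²)`. -/
theorem generic_one_sample_typeII
    {E : Type*} [NormedAddCommGroup E] [MeasurableSpace E] [BorelSpace E]
    {Ω : Type*} [MeasurableSpace Ω] (μ : Measure Ω) [IsProbabilityMeasure μ]
    (ρ σ : E) (m : ℕ) (hm : 1 ≤ m)
    (σhat : Ω → E) (hmeas : Measurable σhat)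
    (C g : ℝ) (hC : 0 < C) (hg : 0 < g)
    (hconc : ∀ t > (0 : ℝ),
      μ {ω | ‖σhat ω - σ‖ ≥ t} ≤ ENNReal.ofReal (g * Real.exp (-(m : ℝ) * C * t ^ 2)))
    (c : ℝ) (hcpos : 0 < c) (hc : c < ‖ρ - σ‖) :
    μ {ω | ‖σhat ω - ρ‖ ≤ c} ≤
      ENNReal.ofReal (g * Real.exp (-C * (m : ℝ) * (‖ρ - σ‖ - c) ^ 2)) := by
  have h := hconc (‖ρ - σ‖ - c) (sub_pos.mpr hc)
  have e : -C * (m : ℝ) * (‖ρ - σ‖ - c) ^ 2 = -(m : ℝ) * C * (‖ρ - σ‖ - c) ^ 2 := by ring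
  rw [e]
  refine le_trans (measure_mono ?_) h
  intro ω hω
  have h1 : ‖σhat ω - ρ‖ ≤ c := hω
  have h2 : ‖ρ - σ‖ ≤ ‖ρ - σhat ω‖ + ‖σhat ω - σ‖ := norm_sub_le_norm_sub_add_norm_sub _ _ _
  rw [norm_sub_rev ρ (σhat ω)] at h2
  show ‖σhat ω - σ‖ ≥ ‖ρ - σ‖ - c
  linarith
end

section
/- (Generic two-sample test, type I error.) Let E be a normed additive commutative group, let σ ∈ E, let m, n ≥ 1 and k = min{m, n}, and let σ̂_m and ρ̂_n be random elements of E on a common probability space (Ω, ℙ). Suppose there are constants C > 0 and g(m), g(n) > 0 such that ℙ(‖σ̂_m − σ‖ ≥ t) ≤ g(m)·exp(−m·C·t²) and ℙ(‖ρ̂_n − σ‖ ≥ t) ≤ g(n)·exp(−n·C·t²) for all t > 0. Then for every c > 0, ℙ(‖σ̂_m − ρ̂_n‖ > c) ≤ (g(m) + g(n))·exp(−k·C·c²/4). In particular, for α ∈ (0,1) with g(m)+g(n) ≥ α, taking c_k = √(4·ln((g(n)+g(m))/α)/(C·k)) gives ℙ(‖σ̂_m − ρ̂_n‖ > c_k)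 ≤ α. -/
open MeasureTheory ProbabilityTheory

/-- Generic two-sample test, type I error: if both estimators concentrate around the common
state `σ`, then `ℙ(‖σ̂_m − ρ̂_n‖ > c) ≤ (g_m+g_n)·exp(−k·C·c²/4)` for every `c > 0`, and the
threshold `c_k = √(4·ln((g_n+g_m)/α)/(C·k))` controls the type I error at level `α`. -/
theorem generic_two_sample_typeI
    {E : Type*} [NormedAddCommGroup E] [MeasurableSpace E] [BorelSpace E]
    {Ω : Type*} [MeasurableSpace Ω] (μ : Measure Ω) [IsProbabilityMeasure μ]
    (σ : E) (m n : ℕ) (hm : 1 ≤ m) (hn : 1 ≤ n) (k : ℕ) (hk : k = min m n)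
    (σhat ρhat : Ω → E) (hmeas₁ : Measurable σhat) (hmeas₂ : Measurable ρhat)
    (C gm gn : ℝ) (hC : 0 < C) (hgm : 0 < gm) (hgn : 0 < gn)
    (hconc₁ : ∀ t > (0 : ℝ),
      μ {ω | ‖σhat ω - σ‖ ≥ t} ≤ ENNReal.ofReal (gm * Real.exp (-(m : ℝ) * C * t ^ 2)))
    (hconc₂ : ∀ t > (0 : ℝ),
      μ {ω | ‖ρhat ω - σ‖ ≥ t} ≤ ENNReal.ofReal (gn * Real.exp (-(n : ℝ) * C * t ^ 2))) :
    (∀ c > (0 : ℝ), μ {ω | ‖σhat ω - ρhat ω‖ > c} ≤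
        ENNReal.ofReal ((gm + gn) * Real.exp (-(k : ℝ) * C * c ^ 2 / 4))) ∧
    ∀ α : ℝ, α ∈ Set.Ioo (0 : ℝ) 1 → α ≤ gm + gn →
      μ {ω | ‖σhat ω - ρhat ω‖ > Real.sqrt (4 * Real.log ((gn + gm) / α) / (C * k))} ≤
        ENNReal.ofReal α := by
  have hkm : (k : ℝ) ≤ m := by
    rw [hk]; exact_mod_cast min_le_left m n
  have hkn : (k : ℝ) ≤ n := by
    rw [hk]; exact_mod_cast min_le_right m n
  have hk1 : (1 : ℝ) ≤ k := by
    rw [hk]; exact_mod_cast le_min hm hn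
  have main : ∀ c > (0 : ℝ), μ {ω | ‖σhat ω - ρhat ω‖ > c} ≤
        ENNReal.ofReal ((gm + gn) * Real.exp (-(k : ℝ) * C * c ^ 2 / 4)) := by
    intro c hc
    have hsub : {ω | ‖σhat ω - ρhat ω‖ > c} ⊆
        {ω | ‖σhat ω - σ‖ ≥ c / 2} ∪ {ω | ‖ρhat ω - σ‖ ≥ c / 2} := by
      intro ω hω
      by_contra hcon
      simp only [Set.mem_union, Set.mem_ofPred_eq, not_or, not_le, ge_iff_le, gt_iff_lt] at hcon hω
      have h := norm_sub_le (σhat ω - σ) (ρhat ω - σ)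
      rw [sub_sub_sub_cancel_right] at h
      linarith [hcon.1, hcon.2]
    have hCc : 0 ≤ C * (c / 2) ^ 2 := by positivity
    have e1 : Real.exp (-(m : ℝ) * C * (c / 2) ^ 2) ≤ Real.exp (-(k : ℝ) * C * c ^ 2 / 4) := by
      apply Real.exp_le_exp.2
      nlinarith [mul_le_mul_of_nonneg_right hkm hCc]
    have e2 : Real.exp (-(n : ℝ) * C * (c / 2) ^ 2) ≤ Real.exp (-(k : ℝ) * C * c ^ 2 / 4) := by
      apply Real.exp_le_exp.2
      nlinarith [mul_le_mul_of_nonneg_right hkn hCc]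
    refine (measure_mono hsub).trans ((measure_union_le _ _).trans ?_)
    refine (add_le_add (hconc₁ _ (half_pos hc)) (hconc₂ _ (half_pos hc))).trans ?_
    rw [← ENNReal.ofReal_add (by positivity) (by positivity)]
    apply ENNReal.ofReal_le_ofReal
    rw [add_mul]
    gcongr
  refine ⟨main, ?_⟩
  intro α hα hle
  have hα0 : 0 < α := hα.1
  rcases hle.eq_or_lt with heq | hlt
  · have h0 : Real.sqrt (4 * Real.log ((gn + gm) / α) / (C * k)) = 0 := by
      rw [add_comm gn gm, ← heq, div_self hα0.ne']; simp
    rw [h0]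
    have hU : {ω | ‖σhat ω - ρhat ω‖ > 0} =
        ⋃ j : ℕ, {ω | ‖σhat ω - ρhat ω‖ > 1 / ((j : ℝ) + 1)} := by
      ext ω
      simp only [Set.mem_iUnion, Set.mem_ofPred_eq]
      constructor
      · intro h
        exact exists_nat_one_div_lt h
      · rintro ⟨j, hj⟩
        exact lt_trans (by positivity) hj
    have hmono : Monotone fun j : ℕ => {ω | ‖σhat ω - ρhat ω‖ > 1 / ((j : ℝ) + 1)} := by
      intro i j hij ω hω
      simp only [Set.mem_ofPred_eq, gt_iff_lt] at hω ⊢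
      exact lt_of_le_of_lt (Nat.one_div_le_one_div hij) hω
    rw [hU, hmono.measure_iUnion]
    refine iSup_le fun j => (main _ (by positivity)).trans ?_
    apply ENNReal.ofReal_le_ofReal
    rw [← heq]
    apply mul_le_of_le_one_right hα0.le
    apply Real.exp_le_one_iff.2
    have : 0 ≤ (k : ℝ) * C * (1 / ((j : ℝ) + 1)) ^ 2 := by positivity
    linarith
  · have hr : 1 < (gn + gm) / α := by
      rw [lt_div_iff₀ hα0]; linarith
    have hlog := Real.log_pos hr
    have hk0 : (0 : ℝ) < k := by linarith
    have hpos : 0 < 4 * Real.log ((gn + gm) / α) / (C * k) := by positivity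
    refine (main _ (Real.sqrt_pos.2 hpos)).trans ?_
    apply ENNReal.ofReal_le_ofReal
    rw [Real.sq_sqrt hpos.le]
    have : -(k : ℝ) * C * (4 * Real.log ((gn + gm) / α) / (C * k)) / 4
        = - Real.log ((gn + gm) / α) := by
      field_simp
    rw [this, Real.exp_neg, Real.exp_log (by linarith), add_comm gn gm, inv_div,
      mul_div_cancel₀ _ (by positivity)]
end

section
/- (Generic two-sample test, type II error.) Let E be a normed additive commutative group, let ρ, σ ∈ E with ρ ≠ σ, let m, n ≥ 1 and k = min{m, n}, and let σ̂_m and ρ̂_n be random elements of E on a common probability space (Ω, ℙ). Suppose there are constants C > 0 and g(m), g(n) > 0 such that ℙ(‖σ̂_m − σ‖ ≥ t) ≤ g(m)·exp(−m·C·t²) and ℙ(‖ρ̂_n − ρ‖ ≥ t) ≤ g(n)·exp(−n·C·t²) for all t > 0. Let c > 0 satisfy c < ‖ρ − σ‖. Then ℙ(‖ρ̂_n − σ̂_m‖ ≤ c) ≤ (g(n) + g(m))·exp(−k·C·(‖ρ − σ‖ − c)²/4). -/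
open MeasureTheory ProbabilityTheory

/-- Generic two-sample test, type II error: if `σ̂_m` concentrates around `σ` and `ρ̂_n` around
`ρ ≠ σ`, then for any threshold `c < ‖ρ−σ‖`,
`ℙ(‖ρ̂_n − σ̂_m‖ ≤ c) ≤ (g_n+g_m)·exp(−k·C·(‖ρ−σ‖−c)²/4)`. -/
theorem generic_two_sample_typeII
    {E : Type*} [NormedAddCommGroup E] [MeasurableSpace E] [BorelSpace E]
    {Ω : Type*} [MeasurableSpace Ω] (μ : Measure Ω) [IsProbabilityMeasure μ]
    (ρ σ : E) (hρσ : ρ ≠ σ)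
    (m n : ℕ) (hm : 1 ≤ m) (hn : 1 ≤ n) (k : ℕ) (hk : k = min m n)
    (σhat ρhat : Ω → E) (hmeas₁ : Measurable σhat) (hmeas₂ : Measurable ρhat)
    (C gm gn : ℝ) (hC : 0 < C) (hgm : 0 < gm) (hgn : 0 < gn)
    (hconc₁ : ∀ t > (0 : ℝ),
      μ {ω | ‖σhat ω - σ‖ ≥ t} ≤ ENNReal.ofReal (gm * Real.exp (-(m : ℝ) * C * t ^ 2)))
    (hconc₂ : ∀ t > (0 : ℝ),
      μ {ω | ‖ρhat ω - ρ‖ ≥ t} ≤ ENNReal.ofReal (gn * Real.exp (-(n : ℝ) * C * t ^ 2)))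
    (c : ℝ) (hcpos : 0 < c) (hc : c < ‖ρ - σ‖) :
    μ {ω | ‖ρhat ω - σhat ω‖ ≤ c} ≤
      ENNReal.ofReal ((gn + gm) * Real.exp (-(k : ℝ) * C * (‖ρ - σ‖ - c) ^ 2 / 4)) := by
  have ht : 0 < (‖ρ - σ‖ - c) / 2 := by linarith
  have key : ∀ (j : ℕ) (g : ℝ), k ≤ j → 0 < g →
      g * Real.exp (-(j : ℝ) * C * ((‖ρ - σ‖ - c) / 2) ^ 2) ≤
        g * Real.exp (-(k : ℝ) * C * (‖ρ - σ‖ - c) ^ 2 / 4) := by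
    intro j g hj hg
    have hj' : (k : ℝ) ≤ j := by exact_mod_cast hj
    apply mul_le_mul_of_nonneg_left _ hg.le
    apply Real.exp_le_exp.mpr
    have h0 : 0 ≤ C * (‖ρ - σ‖ - c) ^ 2 := by positivity
    have := mul_le_mul_of_nonneg_right hj' h0
    linarith
  have hsub : {ω | ‖ρhat ω - σhat ω‖ ≤ c} ⊆
      {ω | ‖ρhat ω - ρ‖ ≥ (‖ρ - σ‖ - c) / 2} ∪ {ω | ‖σhat ω - σ‖ ≥ (‖ρ - σ‖ - c) / 2} := by
    intro ω hω
    simp only [Set.mem_union, Set.mem_setOf_eq] at hω ⊢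
    by_contra hcon
    have h1 : ¬ (‖ρhat ω - ρ‖ ≥ (‖ρ - σ‖ - c) / 2) := fun h => hcon (Or.inl h)
    have h2 : ¬ (‖σhat ω - σ‖ ≥ (‖ρ - σ‖ - c) / 2) := fun h => hcon (Or.inr h)
    have e : ρ - σ = (ρhat ω - σhat ω) - (ρhat ω - ρ) + (σhat ω - σ) := by abel
    have h3 := norm_add_le ((ρhat ω - σhat ω) - (ρhat ω - ρ)) (σhat ω - σ)
    have h4 := norm_sub_le (ρhat ω - σhat ω) (ρhat ω - ρ)
    rw [← e] at h3
    linarith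
  refine (measure_mono hsub).trans ((measure_union_le _ _).trans ?_)
  rw [add_mul, ENNReal.ofReal_add (by positivity) (by positivity)]
  exact add_le_add
    ((hconc₂ _ ht).trans (ENNReal.ofReal_le_ofReal (key n gn (by omega) hgn)))
    ((hconc₁ _ ht).trans (ENNReal.ofReal_le_ofReal (key m gm (by omega) hgm)))
end

section
/- (Sharpness of Pinsker's inequality.) For every ε > 0 there exist distinct probability distributions P and Q on the two-element alphabet {0,1} such that (1/2)·‖P − Q‖₁² ≤ D(P‖Q) ≤ (1/2 + ε)·‖P − Q‖₁², i.e., the ratio D(P‖Q)/‖P − Q‖₁² lies in the interval [1/2, 1/2 + ε]. -/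
/-- Sharpness of Pinsker's inequality: for every `ε > 0` there are distinct binary
distributions `P, Q` with `(1/2)·‖P − Q‖₁² ≤ D(P‖Q) ≤ (1/2 + ε)·‖P − Q‖₁²`. -/
theorem pinsker_sharp :
    ∀ ε > (0 : ℝ), ∃ P Q : Bool → ℝ,
      (∀ x, 0 ≤ P x) ∧ (∑ x, P x) = 1 ∧
      (∀ x, 0 < Q x) ∧ (∑ x, Q x) = 1 ∧
      P ≠ Q ∧
      (1 / 2) * (∑ x, |P x - Q x|) ^ 2 ≤ ∑ x, P x * Real.log (P x / Q x) ∧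
      (∑ x, P x * Real.log (P x / Q x)) ≤ (1 / 2 + ε) * (∑ x, |P x - Q x|) ^ 2 := by
  intro ε hε
  obtain ⟨t, ht0, ht1, ht⟩ : ∃ t : ℝ, 0 < t ∧ t < 1 ∧ 1 ≤ (1 + 2 * ε) * (1 - t ^ 2) := by
    refine ⟨2 * ε / (1 + 2 * ε), by positivity, ?_, ?_⟩
    · rw [div_lt_one (by positivity)]; linarith
    · have h : (1 + 2 * ε) * (1 - (2 * ε / (1 + 2 * ε)) ^ 2) - 1 = 2 * ε / (1 + 2 * ε) := by
        field_simp
        ring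
      have : 0 < 2 * ε / (1 + 2 * ε) := by positivity
      linarith
  have hu : 0 < 1 - t ^ 2 := by nlinarith
  have hD : (∑ x : Bool, (1 / 2 : ℝ) * Real.log ((1 / 2 : ℝ) / (if x then (1 + t) / 2 else (1 - t) / 2)))
      = -(1 / 2) * Real.log (1 - t ^ 2) := by
    have e : (1 : ℝ) - t ^ 2 = (1 + t) * (1 - t) := by ring
    have e1 : (1 / 2 : ℝ) / ((1 + t) / 2) = (1 + t)⁻¹ := by field_simp
    have h1 : (1 - t) ≠ 0 := by linarith
    have e2 : (1 / 2 : ℝ) / ((1 - t) / 2) = (1 - t)⁻¹ := by field_simp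
    rw [e, Real.log_mul (by linarith) h1, Fintype.sum_bool]
    simp only [if_true, Bool.false_eq_true, if_false]
    rw [e1, e2, Real.log_inv, Real.log_inv]
    ring
  have hN : (∑ x : Bool, |(1 / 2 : ℝ) - (if x then (1 + t) / 2 else (1 - t) / 2)|) = t := by
    rw [Fintype.sum_bool]
    simp only [if_true, Bool.false_eq_true, if_false]
    rw [abs_of_nonpos (by linarith), abs_of_nonneg (by linarith)]
    ring
  refine ⟨fun _ => 1 / 2, fun x => if x then (1 + t) / 2 else (1 - t) / 2, ?_, ?_, ?_, ?_, ?_, ?_, ?_⟩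
  · intro x; norm_num
  · norm_num
  · intro x
    cases x
    · simp only [Bool.false_eq_true, if_false]; linarith
    · simp only [if_true]; linarith
  · rw [Fintype.sum_bool]
    simp only [if_true, Bool.false_eq_true, if_false]
    ring
  · intro h
    have := congrFun h true
    simp only [if_true] at this
    linarith
  · simp only [hD, hN]
    have := Real.log_le_sub_one_of_pos hu
    linarith
  · simp only [hD, hN]
    have h := Real.one_sub_inv_le_log_of_pos hu
    have h2 : (1 - t ^ 2)⁻¹ - 1 = t ^ 2 * (1 - t ^ 2)⁻¹ := by
      field_simp
      ring
    have h3 : (1 - t ^ 2)⁻¹ ≤ 1 + 2 * ε := by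
      rw [inv_le_iff_one_le_mul₀ hu]; linarith
    have h4 := mul_le_mul_of_nonneg_left h3 (sq_nonneg t)
    linarith
end
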